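/- Let q be a prime power with q ≡ 1 (mod 4) and 3 dividing q-1, let ζ be a square root of -1 in F_q, let C_5 = {0, 1, -1, ζ, -ζ}, and let χ₃ be a multiplicative character of F_q of order 3 with complex values (extended by χ₃(0) = 0). Then the sum S(3;q,5) = Σ_{γ ∈ F_q \ C_5} Π_{α ∈ C_5} (2 - χ₃(γ - α) - χ₃((γ - α)²)) is a real number and satisfies S(3;q,5) ≥ 2^5 (q - 49√q - 160). -/

import Mathlib

open Finset

open Polynomial in
theorem pow_dvd_hasseDeriv_pow_mul {R : Type*} [CommRing R] (f s : R[X]) (N l : ℕ) :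
    f ^ (N - l) ∣ hasseDeriv l (f ^ N * s) := by
  induction N generalizing l with
  | zero => simp
  | succ N ih =>
    rw [pow_succ', mul_assoc, hasseDeriv_mul]
    refine Finset.dvd_sum fun ij hij => ?_
    rw [HasAntidiagonal.mem_antidiagonal] at hij
    obtain ⟨i, j⟩ := ij
    simp only at hij ⊢
    rcases Nat.eq_zero_or_pos i with rfl | hi
    · obtain rfl : j = l := by omega
      rw [hasseDeriv_zero']
      refine (pow_dvd_pow f (by omega : N + 1 - j ≤ (N - j) + 1)).trans ?_
      rw [pow_succ']
      exact mul_dvd_mul_left _ (ih j)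
    · exact ((pow_dvd_pow f (by omega)).trans (ih j)).mul_left _

open Polynomial in
theorem X_sub_C_pow_dvd_of_hasseDeriv {R : Type*} [CommRing R] {p : R[X]} {x : R} {n : ℕ}
    (h : ∀ l < n, (hasseDeriv l p).eval x = 0) : (X - C x) ^ n ∣ p := by
  rw [X_sub_C_pow_dvd_iff, ← taylor_apply, X_pow_dvd_iff]
  intro d hd
  rw [taylor_coeff, h d hd]

open Polynomial in
theorem hasseDeriv_mul_X_pow_card {K : Type*} [Field K] [Fintype K] (p : K[X]) (j l : ℕ)
    (hl : l < Fintype.card K) :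
    hasseDeriv l (p * X ^ (j * Fintype.card K)) =
      hasseDeriv l p * X ^ (j * Fintype.card K) := by
  have key : ∀ i, 0 < i → i < Fintype.card K →
      hasseDeriv i (X ^ (j * Fintype.card K) : K[X]) = 0 := by
    intro i hi hi'
    have hchoose : (((j * Fintype.card K).choose i : ℕ) : K) = 0 := by
      rw [← coeff_one_add_X_pow, pow_mul, ← FiniteField.expand_card, coeff_expand (by omega),
        if_neg (Nat.not_dvd_of_pos_of_lt hi hi')]
    rw [X_pow_eq_monomial, hasseDeriv_monomial, hchoose]
    simp
  rw [hasseDeriv_mul, Finset.sum_eq_single (l, 0)]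
  · simp
  · rintro ⟨a, b⟩ hab hne
    simp only [HasAntidiagonal.mem_antidiagonal] at hab
    have hb : 0 < b := by
      rcases Nat.eq_zero_or_pos b with rfl | h
      · exact absurd (by simpa using hab) (by simpa using hne)
      · exact h
    simp only [key b hb (by omega), mul_zero]
  · simp

open Polynomial in
theorem exists_linearMap_hasseDeriv_pow_mul {K : Type*} [Field K] {f : K[X]} (hf : f.Monic)
    (N l : ℕ) (hl : l ≤ N) :
    ∃ E : K[X] →ₗ[K] K[X], ∀ s, hasseDeriv l (f ^ N * s) = f ^ (N - l) * E s ∧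
      (E s).natDegree ≤ s.natDegree + l * f.natDegree := by
  have hf0 : f ^ (N - l) ≠ 0 := pow_ne_zero _ hf.ne_zero
  choose E hE using fun s => pow_dvd_hasseDeriv_pow_mul f s N l
  refine ⟨⟨⟨E, fun s t => ?_⟩, fun c s => ?_⟩, fun s => ⟨hE s, ?_⟩⟩
  · apply mul_left_cancel₀ hf0
    rw [← hE, mul_add, map_add, mul_add, hE, hE]
  · apply mul_left_cancel₀ hf0
    rw [← hE, mul_smul_comm, map_smul, hE, RingHom.id_apply, mul_smul_comm]
  · change (E s).natDegree ≤ _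
    rcases eq_or_ne (E s) 0 with h0 | h0
    · simp [h0]
    have h1 := natDegree_hasseDeriv_le (f ^ N * s) l
    rw [hE s, (hf.pow _).natDegree_mul' h0, hf.natDegree_pow] at h1
    have h2 := (natDegree_mul_le (p := f ^ N) (q := s))
    rw [hf.natDegree_pow] at h2
    have h3 : N * f.natDegree = (N - l) * f.natDegree + l * f.natDegree := by
      rw [← add_mul, Nat.sub_add_cancel hl]
    omega

open Polynomial in
theorem finite_degreeLT (K : Type*) [Field K] (n : ℕ) : Module.Finite K (degreeLT K n) :=
  Module.Finite.equiv (degreeLTEquiv K n).symm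

open Polynomial in
theorem finrank_degreeLT_eq (K : Type*) [Field K] (n : ℕ) :
    Module.finrank K (degreeLT K n) = n := by
  rw [(degreeLTEquiv K n).finrank_eq, Module.finrank_fin_fun]

open Polynomial in
theorem natDegree_lt_of_mem_degreeLT {K : Type*} [Field K] {n : ℕ} {p : K[X]}
    (hp : p ∈ degreeLT K n) (hn : 0 < n) : p.natDegree < n := by
  rcases eq_or_ne p 0 with rfl | h0
  · simpa using hn
  · rw [mem_degreeLT] at hp
    exact (natDegree_lt_iff_degree_lt h0).2 hp

open Polynomial in
/-- The linear algebra step of Stepanov's method. -/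
theorem exists_stepanov_coefficients {K : Type*} [Field K] {f : K[X]} (hf : f.Monic)
    (g L D J : ℕ) (a : K) (hD : 0 < D)
    (hcount : L * (D + J + L * f.natDegree) < 3 * J * D) :
    ∃ r : Fin 3 × Fin J → K[X], (∃ ij, r ij ≠ 0) ∧ (∀ ij, (r ij).natDegree < D) ∧
      ∀ l < L, ∃ e : Fin 3 × Fin J → K[X],
        (∀ ij, hasseDeriv l (f ^ (L + ij.1 * g) * r ij) = f ^ (L + ij.1 * g - l) * e ij) ∧
        ∑ ij, C a ^ (ij.1 : ℕ) * X ^ (ij.2 : ℕ) * e ij = 0 := by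
  have := finite_degreeLT K
  set M := D + J + L * f.natDegree with hM
  choose E hE hdeg using fun (i : Fin 3) (l : Fin L) => exists_linearMap_hasseDeriv_pow_mul hf
    (L + i * g) l (l.2.le.trans (Nat.le_add_right _ _))
  let V := Fin 3 × Fin J → degreeLT K D
  let S : Fin L → V →ₗ[K] K[X] := fun l => ∑ ij : Fin 3 × Fin J,
    LinearMap.mulLeft K (C a ^ (ij.1 : ℕ) * X ^ (ij.2 : ℕ)) ∘ₗ E ij.1 l ∘ₗ
      (degreeLT K D).subtype ∘ₗ LinearMap.proj ij
  have hS : ∀ l v, S l v = ∑ ij : Fin 3 × Fin J,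
      C a ^ (ij.1 : ℕ) * X ^ (ij.2 : ℕ) * E ij.1 l (v ij) := by
    intro l v
    simp only [S, LinearMap.sum_apply]
    rfl
  have hmem : ∀ l v, S l v ∈ degreeLT K M := by
    intro l v
    rw [hS]
    refine Submodule.sum_mem _ fun ij _ => ?_
    rw [mem_degreeLT]
    refine degree_le_natDegree.trans_lt (Nat.cast_lt.2 ?_)
    have h1 := hdeg ij.1 l (v ij)
    have h2 := natDegree_lt_of_mem_degreeLT (v ij).2 hD
    have h3 : (C a ^ (ij.1 : ℕ) * X ^ (ij.2 : ℕ) * E ij.1 l (v ij)).natDegree ≤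
        0 + ij.2 + (E ij.1 l (v ij)).natDegree := by
      refine natDegree_mul_le.trans (Nat.add_le_add_right (natDegree_mul_le.trans ?_) _)
      rw [← C_pow, natDegree_C, natDegree_X_pow]
    have h4 := ij.2.2
    have h5 : l * f.natDegree ≤ L * f.natDegree := Nat.mul_le_mul_right _ l.2.le
    omega
  let T : V →ₗ[K] (Fin L → degreeLT K M) :=
    LinearMap.pi fun l => LinearMap.codRestrict _ (S l) (hmem l)
  have hker : LinearMap.ker T ≠ ⊥ := by
    apply LinearMap.ker_ne_bot_of_finrank_lt
    rw [Module.finrank_pi_fintype, Module.finrank_pi_fintype]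
    simp only [finrank_degreeLT_eq, sum_const, card_univ, Fintype.card_prod, Fintype.card_fin,
      smul_eq_mul]
    exact hcount
  obtain ⟨v, hv, hv0⟩ := Submodule.exists_mem_ne_zero_of_ne_bot hker
  refine ⟨fun ij => v ij, ?_, fun ij => natDegree_lt_of_mem_degreeLT (v ij).2 hD,
    fun l hl => ⟨fun ij => E ij.1 ⟨l, hl⟩ (v ij), fun ij => hE ij.1 ⟨l, hl⟩ (v ij), ?_⟩⟩
  · by_contra! h
    exact hv0 (funext fun ij => Subtype.ext (h ij))
  · rw [← hS]
    exact congrArg Subtype.val (congrFun (LinearMap.mem_ker.1 hv) ⟨l, hl⟩)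

open Polynomial in
theorem stepanov_polynomial_ne_zero {K : Type*} [Field K] {f : K[X]} (hf : f.Monic)
    (hm : ¬ 3 ∣ f.natDegree) (g D J : ℕ) (hD : 3 * D + 2 * f.natDegree ≤ 3 * g + 1)
    (r : Fin 3 × Fin J → K[X]) (hr : ∃ ij, r ij ≠ 0) (hdeg : ∀ ij, (r ij).natDegree < D) :
    ∑ ij : Fin 3 × Fin J, f ^ (ij.1 * g) * r ij * X ^ (ij.2 * (3 * g + 1)) ≠ 0 := by
  set F : Fin 3 × Fin J → K[X] := fun ij =>
    f ^ (ij.1 * g) * r ij * X ^ (ij.2 * (3 * g + 1)) with hF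
  have hne : ∀ ij, r ij ≠ 0 → F ij ≠ 0 := fun ij h =>
    mul_ne_zero (mul_ne_zero (pow_ne_zero _ hf.ne_zero) h) (pow_ne_zero _ X_ne_zero)
  have hFdeg : ∀ ij, F ij ≠ 0 → (F ij).natDegree =
      ij.1 * g * f.natDegree + (r ij).natDegree + ij.2 * (3 * g + 1) := by
    intro ij h
    have h' : r ij ≠ 0 := by
      intro h0
      simp [hF, h0] at h
    simp only [hF]
    rw [natDegree_mul_X_pow _ (mul_ne_zero (pow_ne_zero _ hf.ne_zero) h'),
      (hf.pow _).natDegree_mul' h', hf.natDegree_pow]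
  obtain ⟨ij₀, h₀⟩ := hr
  intro hsum
  have hsum' : (∑ ij, F ij).degree = univ.sup fun ij => (F ij).degree := by
    apply degree_sum_eq_of_disjoint
    rintro ij ⟨-, hij⟩ kl ⟨-, hkl⟩ hne' heq
    apply hne'
    simp only [Function.comp] at heq
    have heq' := natDegree_eq_of_degree_eq heq
    rw [hFdeg ij hij, hFdeg kl hkl] at heq'
    have d1 := hdeg ij
    have d2 := hdeg kl
    obtain ⟨i, j⟩ := ij
    obtain ⟨k, l⟩ := kl
    simp only at heq' d1 d2
    generalize (r (i, j)).natDegree = u at *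
    generalize (r (k, l)).natDegree = w at *
    have key : (i : ℤ) * f.natDegree + 3 * j = k * f.natDegree + 3 * l := by
      have hi : (i : ℤ) ≤ 2 := by have := i.2; omega
      have hk : (k : ℤ) ≤ 2 := by have := k.2; omega
      zify at heq' d1 d2 hD
      set m : ℤ := ((f.natDegree : ℕ) : ℤ) with hmdef
      have hm0 : 0 ≤ m := by positivity
      have e : (3 * (g : ℤ) + 1) * ((i * m + 3 * j) - (k * m + 3 * l)) =
        i * m - k * m + 3 * w - 3 * u := by linear_combination 3 * heq'
      have i0 : (0 : ℤ) ≤ i * m := by positivity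
      have k0 : (0 : ℤ) ≤ k * m := by positivity
      have i1 : (i : ℤ) * m ≤ 2 * m := by gcongr
      have k1 : (k : ℤ) * m ≤ 2 * m := by gcongr
      have hg : (0 : ℤ) < 3 * g + 1 := by positivity
      by_contra hne
      rcases lt_or_gt_of_ne hne with h | h
      · nlinarith
      · nlinarith
    have hik : i = k := by
      have h3 : ((i : ℤ) - k) * f.natDegree = 3 * (l - j) := by linear_combination key
      have hm' : ¬ (3 : ℤ) ∣ f.natDegree := by exact_mod_cast hm
      have : (3 : ℤ) ∣ (i : ℤ) - k :=
        (Int.prime_three.dvd_or_dvd ⟨_, h3⟩).resolve_right hm'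
      ext
      have := i.2
      have := k.2
      omega
    subst hik
    have : j = l := by
      ext
      omega
    rw [this]
  have hle := Finset.le_sup (f := fun ij => (F ij).degree) (mem_univ ij₀)
  rw [← hsum'] at hle
  change ∑ ij, F ij = 0 at hsum
  rw [hsum, degree_zero, le_bot_iff, degree_eq_bot] at hle
  exact hne ij₀ h₀ hle

open Polynomial in
theorem mul_card_le_natDegree_of_pow_dvd {K : Type*} [Field K] (s : Finset K) (n : ℕ)
    {p : K[X]} (hp : p ≠ 0) (h : ∀ x ∈ s, (X - C x) ^ n ∣ p) : n * #s ≤ p.natDegree := by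
  have hdvd : ∏ x ∈ s, (X - C x) ^ n ∣ p := by
    refine Finset.prod_dvd_of_coprime (fun x _ y _ hxy => ?_) h
    exact (pairwise_coprime_X_sub_C Function.injective_id hxy).pow
  have := natDegree_le_of_dvd hdvd hp
  rw [natDegree_prod_of_monic _ _ fun x _ => (monic_X_sub_C x).pow n] at this
  simpa [mul_comm] using this

open Polynomial in
theorem stepanov_bound_of_parameters {K : Type*} [Field K] [Fintype K] [DecidableEq K] {f : K[X]}
    (hf : f.Monic) (hm : ¬ 3 ∣ f.natDegree) (g : ℕ) (hg : Fintype.card K = 3 * g + 1) (a : K)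
    (L D J : ℕ) (hL : L ≤ 3 * g + 1) (hD0 : 0 < D) (hD : 3 * D + 2 * f.natDegree ≤ 3 * g + 1)
    (hcount : L * (D + J + L * f.natDegree) < 3 * J * D) :
    L * #{x : K | f.eval x ^ g = a} ≤
      L * f.natDegree + 2 * g * f.natDegree + D + J * (3 * g + 1) := by
  obtain ⟨r, hr, hdeg, hE⟩ := exists_stepanov_coefficients hf g L D J a hD0 hcount
  set R := ∑ ij : Fin 3 × Fin J, f ^ (ij.1 * g) * r ij * X ^ (ij.2 * (3 * g + 1)) with hR
  have hR0 : R ≠ 0 := stepanov_polynomial_ne_zero hf hm g D J hD r hr hdeg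
  have hRdeg : R.natDegree ≤ 2 * g * f.natDegree + D + J * (3 * g + 1) := by
    refine natDegree_sum_le_of_forall_le _ _ fun ij _ => ?_
    refine natDegree_mul_le.trans (add_le_add (natDegree_mul_le.trans
      (add_le_add ?_ (hdeg ij).le)) ?_)
    · rw [hf.natDegree_pow]
      have : (ij.1 : ℕ) ≤ 2 := by have := ij.1.2; omega
      gcongr
    · rw [natDegree_X_pow]
      have := ij.2.2.le
      gcongr
  have h0 : f ^ L * R ≠ 0 := mul_ne_zero (pow_ne_zero _ hf.ne_zero) hR0
  refine (mul_card_le_natDegree_of_pow_dvd _ L h0 fun x hx => ?_).trans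
    (natDegree_mul_le.trans ?_)
  · refine X_sub_C_pow_dvd_of_hasseDeriv fun l hl => ?_
    obtain ⟨e, he, hsum⟩ := hE l hl
    have hx' : f.eval x ^ g = a := by simpa using hx
    have hxQ : x ^ (3 * g + 1) = x := by rw [← hg, FiniteField.pow_card]
    have h1 : f ^ L * R = ∑ ij : Fin 3 × Fin J,
        (f ^ (L + ij.1 * g) * r ij) * X ^ (ij.2 * Fintype.card K) := by
      rw [hR, Finset.mul_sum, hg]
      refine sum_congr rfl fun ij _ => ?_
      ring
    have h2 := congrArg (eval x) hsum
    rw [h1, map_sum, eval_finsetSum]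
    rw [eval_finsetSum, eval_zero] at h2
    rw [← mul_zero (f.eval x ^ (L - l)), ← h2, Finset.mul_sum]
    refine sum_congr rfl fun ij _ => ?_
    rw [hasseDeriv_mul_X_pow_card _ _ _ (by omega), he, hg]
    have hexp : L + (ij.1 : ℕ) * g - l = (L - l) + ij.1 * g := by omega
    have hxj : x ^ ((ij.2 : ℕ) * (3 * g + 1)) = x ^ (ij.2 : ℕ) := by
      rw [mul_comm, pow_mul, hxQ]
    have hfa : eval x f ^ ((ij.1 : ℕ) * g) = a ^ (ij.1 : ℕ) := by
      rw [mul_comm, pow_mul, hx']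
    simp only [eval_mul, eval_pow, eval_C, eval_X]
    rw [hexp, pow_add, hxj, hfa]
    ring
  · rw [hf.natDegree_pow]
    omega

open Polynomial in
/-- Stepanov's bound for the number of points at which a power residue symbol of a polynomial
takes a given value. -/
theorem stepanov_bound {K : Type*} [Field K] [Fintype K] [DecidableEq K] {f : K[X]}
    (hf : f.Monic) (hm : ¬ 3 ∣ f.natDegree) (g : ℕ) (hg : Fintype.card K = 3 * g + 1) (a : K) :
    3 * #{x : K | f.eval x ^ g = a} ≤
      Fintype.card K + (16 * f.natDegree + 30) * Nat.sqrt (Fintype.card K) := by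
  set m := f.natDegree with hmdef
  set Q := Fintype.card K with hQ
  set L := Nat.sqrt Q with hLdef
  have hL1 : L * L ≤ Q := Nat.sqrt_le _
  have hL2 : Q ≤ L * L + L + L := Nat.sqrt_le_add _
  set N := #{x : K | f.eval x ^ g = a} with hN
  have hNQ : N ≤ Q := card_le_univ _
  rcases lt_or_ge L (4 * (m + 2)) with hLm | hLm
  · nlinarith
  have hLL : 4 * (m + 2) * L ≤ L * L := Nat.mul_le_mul_right _ hLm
  have hQm : 2 * m + 3 ≤ Q := by nlinarith
  obtain ⟨D, hD1, hD2⟩ : ∃ D, 3 * D + 2 * m ≤ Q ∧ Q ≤ 3 * D + 2 * m + 2 :=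
    ⟨(Q - 2 * m) / 3, by omega, by omega⟩
  obtain ⟨J, hJ1, hJ2⟩ : ∃ J, 3 * J ≤ L + 3 * m + 6 ∧ L + 3 * m + 4 ≤ 3 * J :=
    ⟨L / 3 + (m + 2), by omega, by omega⟩
  have hcount : L * (D + J + L * m) < 3 * J * D := by
    have h1 : (L + 3 * m + 4) * (3 * D) ≤ 3 * J * (3 * D) := Nat.mul_le_mul_right _ hJ2
    have h2 : L * (3 * J) ≤ L * (L + 3 * m + 6) := Nat.mul_le_mul_left _ hJ1
    have h3 : (3 * m + 4) * (L * L) ≤ (3 * m + 4) * (3 * D + 2 * m + 2) :=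
      Nat.mul_le_mul_left _ (hL1.trans hD2)
    have h4 : (m + 2) * (4 * (m + 2)) ≤ (m + 2) * L := Nat.mul_le_mul_left _ hLm
    nlinarith
  have key := stepanov_bound_of_parameters hf hm g hg a L D J (by nlinarith) (by omega)
    (by omega) hcount
  rw [← hmdef, ← hN, ← hg] at key
  have hL0 : 0 < L := by omega
  refine Nat.le_of_mul_le_mul_left ?_ hL0
  have h1 : 3 * J * Q ≤ (L + 3 * m + 6) * Q := Nat.mul_le_mul_right _ hJ1
  have h2 : 3 * g * m ≤ Q * m := Nat.mul_le_mul_right _ (by omega)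
  have h3 : (5 * m + 7) * Q ≤ (5 * m + 7) * (L * L + L + L) := Nat.mul_le_mul_left _ hL2
  nlinarith

open Polynomial Filter Topology in
theorem one_le_mul_norm_of_isRoot {L : ℂ[X]} {S : ℕ → ℂ} {C R : ℝ} (hR : 0 < R)
    (hL0 : L.eval 0 ≠ 0) (hS : ∀ n, ‖S n‖ ≤ C * R ^ n)
    (hrec : ∀ n : ℕ, n * L.coeff n = ∑ ij ∈ antidiagonal n, S ij.1 * L.coeff ij.2)
    {ρ : ℂ} (hρ : L.IsRoot ρ) : 1 ≤ R * ‖ρ‖ := by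
  by_contra! hlt
  have hLne : L ≠ 0 := by
    rintro rfl
    simp at hL0
  have hρ0 : ρ ≠ 0 := by
    rintro rfl
    exact hL0 hρ
  obtain ⟨r, hr1, hr2⟩ : ∃ r, ‖ρ‖ < r ∧ R * r < 1 := by
    obtain ⟨r, h1, h2⟩ := exists_between (show ‖ρ‖ < 1 / R by rwa [lt_div_iff₀' hR])
    exact ⟨r, h1, by rwa [lt_div_iff₀' hR] at h2⟩
  have hr0 : 0 ≤ r := (norm_nonneg ρ).trans hr1.le
  have hgeom : Summable fun n : ℕ => C * (R * r) ^ n :=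
    (summable_geometric_of_lt_one (by positivity) hr2).mul_left C
  have hbound : ∀ z : ℂ, ‖z‖ < r → ∀ n, ‖S n * z ^ n‖ ≤ C * (R * r) ^ n := by
    intro z hz n
    rw [norm_mul, norm_pow, mul_pow, ← mul_assoc]
    have := hS n
    have := (norm_nonneg _).trans this
    gcongr
  have hsummable : ∀ z : ℂ, ‖z‖ < r → Summable fun n => ‖S n * z ^ n‖ := fun z hz =>
    Summable.of_nonneg_of_le (fun _ => norm_nonneg _) (hbound z hz) hgeom
  have hLsum : ∀ z : ℂ, HasSum (fun n => L.coeff n * z ^ n) (L.eval z) := by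
    intro z
    rw [eval_eq_sum_range]
    refine hasSum_sum_of_ne_finset_zero fun n hn => ?_
    rw [coeff_eq_zero_of_natDegree_lt (by simpa [Nat.lt_succ_iff] using hn), zero_mul]
  have hLsum_norm : ∀ z : ℂ, Summable fun n => ‖L.coeff n * z ^ n‖ := by
    intro z
    refine summable_of_ne_finset_zero (s := range (L.natDegree + 1)) fun n hn => ?_
    rw [coeff_eq_zero_of_natDegree_lt (by simpa [Nat.lt_succ_iff] using hn), zero_mul, norm_zero]
  have hLdsum : ∀ z : ℂ, HasSum (fun n : ℕ => n * L.coeff n * z ^ n)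
      (z * (derivative L).eval z) := by
    intro z
    have h : z * (derivative L).eval z = (X * derivative L).eval z := by simp
    rw [h, eval_eq_sum_range' (n := L.natDegree + 1)]
    · have hc : ∀ n, (X * derivative L).coeff n = n * L.coeff n := by
        intro n
        cases n with
        | zero => simp
        | succ n => rw [coeff_X_mul, coeff_derivative]; push_cast; ring
      simp only [hc]
      refine hasSum_sum_of_ne_finset_zero fun n hn => ?_
      rw [coeff_eq_zero_of_natDegree_lt (by simpa [Nat.lt_succ_iff] using hn), mul_zero, zero_mul]
    · have h1 := natDegree_derivative_le L
      rcases Nat.eq_zero_or_pos L.natDegree with h0 | h0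
      · rw [derivative_of_natDegree_zero h0]
        simp
      · have h2 : (X * derivative L).natDegree ≤ 1 + (L.natDegree - 1) :=
          natDegree_mul_le.trans (add_le_add natDegree_X_le h1)
        omega
  have hode : ∀ z : ℂ, ‖z‖ < r → z * (derivative L).eval z = (∑' n, S n * z ^ n) * L.eval z := by
    intro z hz
    rw [← (hLsum z).tsum_eq, ← (hLdsum z).tsum_eq,
      tsum_mul_tsum_eq_tsum_sum_antidiagonal_of_summable_norm (hsummable z hz) (hLsum_norm z)]
    refine tsum_congr fun n => ?_
    rw [hrec, Finset.sum_mul]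
    refine sum_congr rfl fun ij hij => ?_
    rw [← HasAntidiagonal.mem_antidiagonal.1 hij, pow_add]
    ring
  obtain ⟨M, hM, hMdvd⟩ := exists_eq_pow_rootMultiplicity_mul_and_not_dvd L hLne ρ
  obtain ⟨v, hv⟩ : ∃ v, L.rootMultiplicity ρ = v + 1 :=
    Nat.exists_eq_succ_of_ne_zero ((rootMultiplicity_pos hLne).2 hρ).ne'
  rw [hv] at hM
  have hMρ : M.eval ρ ≠ 0 := fun h => hMdvd (dvd_iff_isRoot.2 h)
  have hfact : ∀ z : ℂ, z ≠ ρ → ‖z‖ < r →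
      z * ((v + 1) * M.eval z + (z - ρ) * (derivative M).eval z) =
        (∑' n, S n * z ^ n) * ((z - ρ) * M.eval z) := by
    intro z hz hzr
    have h := hode z hzr
    have hz' : (z - ρ) ^ v ≠ 0 := pow_ne_zero _ (sub_ne_zero.2 hz)
    apply mul_left_cancel₀ hz'
    rw [hM] at h
    simp only [derivative_mul, derivative_X_sub_C_pow, eval_add, eval_mul, eval_pow, eval_sub,
      eval_X, eval_C, Nat.add_sub_cancel] at h
    push_cast at h
    linear_combination h
  have hnear : ∀ᶠ z in 𝓝[≠] ρ, z ≠ ρ ∧ ‖z‖ < r :=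
    eventually_mem_nhdsWithin.and
      (((continuous_norm.tendsto ρ).eventually_lt_const hr1).filter_mono nhdsWithin_le_nhds)
  have hlim1 : Tendsto (fun z => z * ((v + 1) * M.eval z + (z - ρ) * (derivative M).eval z))
      (𝓝[≠] ρ) (𝓝 (ρ * ((v + 1) * M.eval ρ + (ρ - ρ) * (derivative M).eval ρ))) := by
    refine Tendsto.mono_left (Continuous.tendsto ?_ ρ) nhdsWithin_le_nhds
    fun_prop
  have hlim2 : Tendsto (fun z => (∑' n, S n * z ^ n) * ((z - ρ) * M.eval z))
      (𝓝[≠] ρ) (𝓝 0) := by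
    have hb : Tendsto (fun z => (∑' n : ℕ, C * (R * r) ^ n) * ‖(z - ρ) * M.eval z‖)
        (𝓝[≠] ρ) (𝓝 ((∑' n : ℕ, C * (R * r) ^ n) * ‖(ρ - ρ) * M.eval ρ‖)) := by
      refine Tendsto.mono_left (Continuous.tendsto ?_ ρ) nhdsWithin_le_nhds
      fun_prop
    rw [sub_self, zero_mul, norm_zero, mul_zero] at hb
    refine squeeze_zero_norm' ?_ hb
    filter_upwards [hnear] with z hz
    rw [norm_mul]
    gcongr
    exact tsum_of_norm_bounded hgeom.hasSum (hbound z hz.2)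
  have heq := tendsto_nhds_unique (hlim1.congr' (by
    filter_upwards [hnear] with z hz using hfact z hz.1 hz.2)) hlim2
  have hv0 : (v : ℂ) + 1 ≠ 0 := by exact_mod_cast v.succ_ne_zero
  simp [hρ0, hv0, hMρ] at heq

open Polynomial in
/-- If the logarithmic derivative of a polynomial `L` has coefficients of growth `R ^ n`, then all
reciprocal roots of `L` are bounded by `R`, hence so is the average of the reciprocal roots. -/
theorem norm_one_le_of_newton_identities {c S : ℕ → ℂ} {C R : ℝ} {t : ℕ} (hR : 0 < R)
    (hc0 : c 0 = 1) (hct : ∀ n, t < n → c n = 0) (hS : ∀ n, ‖S n‖ ≤ C * R ^ n)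
    (hrec : ∀ n : ℕ, n * c n = ∑ ij ∈ antidiagonal n, S ij.1 * c ij.2) :
    ‖c 1‖ ≤ t * R := by
  set L : ℂ[X] := ∑ n ∈ range (t + 1), monomial n (c n) with hL
  have hcoeff : ∀ n, L.coeff n = c n := by
    intro n
    rw [hL, finsetSum_coeff]
    simp only [coeff_monomial, sum_ite_eq', mem_range]
    split_ifs with h
    · rfl
    · exact (hct n (by omega)).symm
  have hdeg : L.natDegree ≤ t :=
    natDegree_le_iff_coeff_eq_zero.2 fun n hn => (hcoeff n).trans (hct n hn)
  have hL0 : L.eval 0 = 1 := by rw [← coeff_zero_eq_eval_zero, hcoeff, hc0]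
  have hL1 : (derivative L).eval 0 = c 1 := by
    rw [← coeff_zero_eq_eval_zero, coeff_derivative, hcoeff]
    simp
  have hroot : ∀ ρ ∈ L.roots, ‖(1 / (0 - ρ) : ℂ)‖ ≤ R := by
    intro ρ hρ
    have h := one_le_mul_norm_of_isRoot hR (by rw [hL0]; exact one_ne_zero) hS
      (by simpa only [hcoeff] using hrec) (isRoot_of_mem_roots hρ)
    have hpos : 0 < ‖ρ‖ := by
      by_contra! h0
      nlinarith
    rw [norm_div, norm_one, zero_sub, norm_neg, div_le_iff₀ hpos]
    exact h
  have hsum := (IsAlgClosed.splits L).eval_derivative_div_eval_of_ne_zero (x := 0)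
    (by rw [hL0]; exact one_ne_zero)
  rw [hL0, hL1, div_one] at hsum
  rw [hsum]
  refine (norm_multiset_sum_le _).trans ?_
  rw [Multiset.map_map]
  refine (Multiset.sum_le_card_nsmul _ R ?_).trans ?_
  · intro x hx
    obtain ⟨ρ, hρ, rfl⟩ := Multiset.mem_map.1 hx
    exact hroot ρ hρ
  · rw [Multiset.card_map, nsmul_eq_mul]
    gcongr
    exact (card_roots' L).trans hdeg

open Polynomial in
theorem finite_setOf_natDegree_le (F : Type*) [Field F] [Finite F] (n : ℕ) :
    {p : F[X] | p.natDegree ≤ n}.Finite := by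
  have := finite_degreeLT F (n + 1)
  have : Finite (degreeLT F (n + 1)) := Module.finite_of_finite F
  refine Set.Finite.subset (Set.toFinite (degreeLT F (n + 1) : Set F[X])) fun p hp => ?_
  rw [SetLike.mem_coe, mem_degreeLT]
  exact degree_le_natDegree.trans_lt (Nat.cast_lt.2 (Nat.lt_succ_of_le hp))

open Polynomial in
/-- The monic polynomials of degree `n` over a finite field. -/
noncomputable def monicsOfDegree (F : Type*) [Field F] [Finite F] (n : ℕ) : Finset F[X] :=
  ((finite_setOf_natDegree_le F n).subset
    (fun _ h => h.2.le : {p : F[X] | p.Monic ∧ p.natDegree = n} ⊆ _)).toFinset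

open Polynomial in
/-- The monic irreducible polynomials of degree at most `n` over a finite field. -/
noncomputable def monicIrreducibles (F : Type*) [Field F] [Finite F] (n : ℕ) : Finset F[X] :=
  ((finite_setOf_natDegree_le F n).subset
    (fun _ h => h.2.2 : {p : F[X] | p.Monic ∧ Irreducible p ∧ p.natDegree ≤ n} ⊆ _)).toFinset

section

variable {F : Type*} [Field F] [Finite F]

open Polynomial

theorem mem_monicsOfDegree {n : ℕ} {p : F[X]} :
    p ∈ monicsOfDegree F n ↔ p.Monic ∧ p.natDegree = n := by
  simp [monicsOfDegree]

theorem mem_monicIrreducibles {n : ℕ} {p : F[X]} :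
    p ∈ monicIrreducibles F n ↔ p.Monic ∧ Irreducible p ∧ p.natDegree ≤ n := by
  simp [monicIrreducibles]

open Classical in
theorem natDegree_eq_sum_irreducible_powers {n : ℕ} {g : F[X]} (hg : g.Monic)
    (hn : g.natDegree = n) :
    n = ∑ P ∈ monicIrreducibles F n, ∑ j ∈ Icc 1 n, if P ^ j ∣ g then P.natDegree else 0 := by
  have hg0 := hg.ne_zero
  set N := UniqueFactorizationMonoid.normalizedFactors g with hN
  have hirr : ∀ P ∈ N, P.Monic ∧ Irreducible P := fun P hP =>
    ⟨(normalize_eq_self_iff_monic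
      (UniqueFactorizationMonoid.irreducible_of_normalized_factor P hP).ne_zero).1
      (UniqueFactorizationMonoid.normalize_normalized_factor P hP),
      UniqueFactorizationMonoid.irreducible_of_normalized_factor P hP⟩
  have hprod : N.prod = g := by
    rw [UniqueFactorizationMonoid.prod_normalizedFactors_eq hg0, hg.normalize_eq_self]
  have hsub : N.toFinset ⊆ monicIrreducibles F n := by
    intro P hP
    rw [Multiset.mem_toFinset] at hP
    refine mem_monicIrreducibles.2 ⟨(hirr P hP).1, (hirr P hP).2, ?_⟩
    rw [← hn]
    exact natDegree_le_of_dvd (UniqueFactorizationMonoid.dvd_of_mem_normalizedFactors hP) hg0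
  have hdeg : n = ∑ P ∈ monicIrreducibles F n, N.count P * P.natDegree := by
    have h1 : (N.map natDegree).sum = n := by
      rw [← hn, ← hprod, natDegree_multiset_prod_of_monic _ fun P hP => (hirr P hP).1]
    refine h1.symm.trans ?_
    rw [Finset.sum_multiset_map_count]
    simp only [smul_eq_mul]
    refine sum_subset hsub fun P _ hP => ?_
    rw [Multiset.mem_toFinset] at hP
    rw [Multiset.count_eq_zero_of_notMem hP, zero_mul]
  conv_lhs => rw [hdeg]
  refine sum_congr rfl fun P hP => ?_
  obtain ⟨hPm, hPi, -⟩ := mem_monicIrreducibles.1 hP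
  have hdvd : ∀ j, P ^ j ∣ g ↔ j ≤ N.count P := by
    intro j
    rw [UniqueFactorizationMonoid.dvd_iff_normalizedFactors_le_normalizedFactors
      (pow_ne_zero _ hPi.ne_zero) hg0, UniqueFactorizationMonoid.normalizedFactors_pow,
      UniqueFactorizationMonoid.normalizedFactors_irreducible hPi, hPm.normalize_eq_self,
      Multiset.nsmul_singleton, Multiset.le_count_iff_replicate_le]
  have hcount : N.count P ≤ n := by
    have h1 := natDegree_le_of_dvd ((hdvd _).2 le_rfl) hg0
    rw [natDegree_pow, hn] at h1
    exact (Nat.le_mul_of_pos_right _ hPi.natDegree_pos).trans h1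
  rw [← sum_filter, sum_const, smul_eq_mul]
  congr 1
  have : {j ∈ Icc 1 n | P ^ j ∣ g} = Icc 1 (N.count P) := by
    ext j
    simp only [mem_filter, mem_Icc, hdvd]
    omega
  rw [this, Nat.card_Icc, Nat.add_sub_cancel]

open Classical in
theorem sum_monicsOfDegree_filter_dvd (lam : F[X] →* ℂ) {n d : ℕ} {p : F[X]} (hp : p.Monic)
    (hd : p.natDegree = d) :
    ∑ g ∈ monicsOfDegree F n with p ∣ g, lam g =
      if d ≤ n then lam p * ∑ h ∈ monicsOfDegree F (n - d), lam h else 0 := by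
  split_ifs with hdn
  · rw [Finset.mul_sum]
    symm
    refine sum_bij (fun h _ => p * h) ?_ ?_ ?_ ?_
    · intro h hh
      obtain ⟨h1, h2⟩ := mem_monicsOfDegree.1 hh
      refine mem_filter.2 ⟨mem_monicsOfDegree.2 ⟨hp.mul h1, ?_⟩, dvd_mul_right _ _⟩
      rw [hp.natDegree_mul h1]
      omega
    · intro h₁ _ h₂ _ h
      exact mul_left_cancel₀ hp.ne_zero h
    · intro g hg
      obtain ⟨hg, h, rfl⟩ := mem_filter.1 hg
      obtain ⟨h1, h2⟩ := mem_monicsOfDegree.1 hg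
      have h3 := hp.of_mul_monic_left h1
      rw [hp.natDegree_mul h3] at h2
      exact ⟨h, mem_monicsOfDegree.2 ⟨h3, by omega⟩, rfl⟩
    · intro h _
      rw [map_mul]
  · refine sum_eq_zero fun g hg => ?_
    obtain ⟨hg, hdvd⟩ := mem_filter.1 hg
    obtain ⟨h1, h2⟩ := mem_monicsOfDegree.1 hg
    have := natDegree_le_of_dvd hdvd h1.ne_zero
    omega

theorem card_filter_minpoly_eq {K : Type*} [Field K] [Fintype K] [Algebra F K] [DecidableEq F[X]]
    {P : F[X]} (hP : P.Monic) (hPi : Irreducible P) :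
    #{x : K | minpoly F x = P} =
      if P.natDegree ∣ Module.finrank F K then P.natDegree else 0 := by
  have hmin : ∀ x : K, minpoly F x = P ↔ aeval x P = 0 := fun x =>
    ⟨fun h => h ▸ minpoly.aeval F x, fun h => (minpoly.eq_of_irreducible_of_monic hPi h hP).symm⟩
  split_ifs with hdvd
  · have hcard : Nat.card F ^ Module.finrank F K = Fintype.card K := by
      have := Fintype.ofFinite F
      rw [Nat.card_eq_fintype_card, ← Module.card_eq_pow_finrank]
    have h1 := hPi.natDegree_dvd_iff_dvd_X_pow_card_pow_sub_X.1 hdvd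
    rw [hcard] at h1
    have h2 := Polynomial.map_dvd (algebraMap F K) h1
    rw [Polynomial.map_sub, Polynomial.map_pow, map_X] at h2
    have h0 : (X ^ Fintype.card K - X : K[X]) ≠ 0 :=
      FiniteField.X_pow_card_sub_X_ne_zero K Fintype.one_lt_card
    have hroots := FiniteField.roots_X_pow_card_sub_X K
    have hsplit : (X ^ Fintype.card K - X : K[X]).Splits := by
      rw [splits_iff_card_roots, hroots,
        FiniteField.X_pow_card_sub_X_natDegree_eq K Fintype.one_lt_card]
      rfl
    have hPs := hsplit.of_dvd h0 h2
    have hnodup : (P.map (algebraMap F K)).roots.Nodup :=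
      Multiset.nodup_of_le (roots.le_of_dvd h0 h2) (hroots ▸ univ.nodup)
    classical
    rw [← natDegree_map (algebraMap F K), ← splits_iff_card_roots.1 hPs,
      ← Multiset.toFinset_card_of_nodup hnodup]
    congr 1
    ext x
    simp [hmin, hP.ne_zero]
  · rw [card_eq_zero, filter_eq_empty_iff]
    rintro x - rfl
    exact hdvd (minpoly.degree_dvd (Algebra.IsIntegral.isIntegral x))

open Classical in
theorem sum_minpoly_pow {K : Type*} [Field K] [Fintype K] [Algebra F K] (lam : F[X] →* ℂ)
    {n k : ℕ} (hk : Module.finrank F K = k) (hkn : k ≤ n) :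
    ∑ x : K, lam (minpoly F x ^ (k / (minpoly F x).natDegree)) =
      ∑ P ∈ monicIrreducibles F n, ∑ j ∈ Icc 1 n,
        if j * P.natDegree = k then P.natDegree * lam P ^ j else 0 := by
  have hk0 : 0 < k := hk ▸ Module.finrank_pos
  rw [← sum_fiberwise_of_maps_to (s := univ) (t := monicIrreducibles F n) (g := minpoly F)]
  · refine sum_congr rfl fun P hP => ?_
    obtain ⟨hPm, hPi, -⟩ := mem_monicIrreducibles.1 hP
    rw [sum_congr rfl fun x hx => by rw [(mem_filter.1 hx).2], sum_const, nsmul_eq_mul,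
      card_filter_minpoly_eq hPm hPi, hk, map_pow]
    have hd := hPi.natDegree_pos
    split_ifs with h
    · obtain ⟨j, rfl⟩ := h
      have hj : 0 < j := Nat.pos_of_mul_pos_left hk0
      rw [Nat.mul_div_cancel_left _ hd, sum_eq_single j]
      · rw [if_pos (mul_comm _ _)]
      · intro i _ hij
        rw [if_neg fun h => hij (Nat.eq_of_mul_eq_mul_right hd (h.trans (mul_comm _ _)))]
      · intro hj'
        exact absurd (mem_Icc.2 ⟨hj, (Nat.le_mul_of_pos_left _ hd).trans hkn⟩) hj'
    · rw [Nat.cast_zero, zero_mul, sum_eq_zero]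
      intro j _
      exact if_neg fun hj => h ⟨j, by rw [← hj, mul_comm]⟩
  · intro x _
    have hx : IsIntegral F x := Algebra.IsIntegral.isIntegral x
    exact mem_monicIrreducibles.2 ⟨minpoly.monic hx, minpoly.irreducible hx,
      (minpoly.natDegree_le x).trans (hk ▸ hkn)⟩

/-- The Newton identities relating the coefficients of the `L`-function of a completely
multiplicative function on polynomials to the sums over the points of extension fields. -/
theorem newton_identity_of_extensions (lam : F[X] →* ℂ) (S : ℕ → ℂ) (hS0 : S 0 = 0)
    (hS : ∀ n, ∀ k ∈ Icc 1 n, S k = ∑ P ∈ monicIrreducibles F n, ∑ j ∈ Icc 1 n,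
        if j * P.natDegree = k then P.natDegree * lam P ^ j else 0) (n : ℕ) :
    n * ∑ g ∈ monicsOfDegree F n, lam g =
      ∑ ij ∈ antidiagonal n, S ij.1 * ∑ g ∈ monicsOfDegree F ij.2, lam g := by
  classical
  have hleft : n * ∑ g ∈ monicsOfDegree F n, lam g =
      ∑ P ∈ monicIrreducibles F n, ∑ j ∈ Icc 1 n, (P.natDegree : ℂ) *
        ∑ g ∈ monicsOfDegree F n with P ^ j ∣ g, lam g := by
    rw [Finset.mul_sum]
    have h1 : ∀ g ∈ monicsOfDegree F n, (n : ℂ) * lam g =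
        ∑ P ∈ monicIrreducibles F n, ∑ j ∈ Icc 1 n,
          if P ^ j ∣ g then (P.natDegree : ℂ) * lam g else 0 := by
      intro g hg
      obtain ⟨hg1, hg2⟩ := mem_monicsOfDegree.1 hg
      have h := congrArg (Nat.cast : ℕ → ℂ) (natDegree_eq_sum_irreducible_powers hg1 hg2)
      push_cast at h
      conv_lhs => rw [h]
      simp only [Finset.sum_mul, ite_mul, zero_mul]
    rw [sum_congr rfl h1, sum_comm]
    refine sum_congr rfl fun P _ => ?_
    rw [sum_comm]
    refine sum_congr rfl fun j _ => ?_
    rw [← sum_filter, Finset.mul_sum]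
  rw [hleft, Finset.Nat.sum_antidiagonal_eq_sum_range_succ_mk, sum_range_succ', hS0, zero_mul,
    add_zero]
  have hright : ∀ k ∈ range n, S (k + 1) * ∑ g ∈ monicsOfDegree F (n - (k + 1)), lam g =
      ∑ P ∈ monicIrreducibles F n, ∑ j ∈ Icc 1 n, if j * P.natDegree = k + 1 then
        P.natDegree * lam P ^ j * ∑ g ∈ monicsOfDegree F (n - (k + 1)), lam g else 0 := by
    intro k hk
    rw [mem_range] at hk
    rw [hS n (k + 1) (mem_Icc.2 (by omega))]
    simp only [Finset.sum_mul, ite_mul, zero_mul]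
  rw [sum_congr rfl hright, sum_comm (s := range n)]
  refine sum_congr rfl fun P hP => ?_
  obtain ⟨hPm, hPi, -⟩ := mem_monicIrreducibles.1 hP
  rw [sum_comm (s := range n)]
  refine sum_congr rfl fun j hj => ?_
  rw [sum_monicsOfDegree_filter_dvd lam (hPm.pow j) (hPm.natDegree_pow j)]
  have hpos : 0 < j * P.natDegree := Nat.mul_pos (mem_Icc.1 hj).1 hPi.natDegree_pos
  split_ifs with h
  · rw [sum_eq_single (j * P.natDegree - 1)]
    · rw [Nat.sub_add_cancel hpos, if_pos rfl, map_pow, mul_assoc]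
    · intro k _ hk
      exact if_neg (by omega)
    · intro hk
      exact absurd (mem_range.2 (by omega)) hk
  · rw [mul_zero, sum_eq_zero]
    intro k hk
    rw [mem_range] at hk
    exact if_neg (by omega)

end

open Polynomial IntermediateField in
theorem norm_algebraMap_sub_eq_eval_minpoly_pow {F K : Type*} [Field F] [Field K] [Algebra F K]
    [FiniteDimensional F K] [Algebra.IsSeparable F K] (x : K) (a : F) :
    Algebra.norm F (algebraMap F K a - x) =
      ((minpoly F x).eval a) ^ (Module.finrank F K / (minpoly F x).natDegree) := by
  set y := x - algebraMap F K a with hy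
  have hint : IsIntegral F y := Algebra.IsIntegral.isIntegral y
  have hminy : minpoly F y = (minpoly F x).comp (X + C a) := minpoly.sub_algebraMap x a
  have hdeg : (minpoly F y).natDegree = (minpoly F x).natDegree := by
    rw [hminy, natDegree_comp, natDegree_X_add_C, mul_one]
  have hfin : Module.finrank F F⟮y⟯ = (minpoly F x).natDegree := by
    rw [adjoin.finrank hint, hdeg]
  have htower := Module.finrank_mul_finrank F F⟮y⟯ K
  have hpos : 0 < (minpoly F x).natDegree := minpoly.natDegree_pos (Algebra.IsIntegral.isIntegral x)
  have hk : Module.finrank F⟮y⟯ K = Module.finrank F K / (minpoly F x).natDegree := by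
    rw [← htower, hfin, Nat.mul_div_cancel_left _ hpos]
  have hgen := Algebra.PowerBasis.norm_gen_eq_coeff_zero_minpoly (adjoin.powerBasis hint)
  rw [adjoin.powerBasis_gen, minpoly_gen, adjoin.powerBasis_dim, hdeg, hminy,
    coeff_zero_eq_eval_zero, eval_comp] at hgen
  have hnorm : Algebra.norm F y = (-1) ^ Module.finrank F K *
      ((minpoly F x).eval a) ^ (Module.finrank F K / (minpoly F x).natDegree) := by
    rw [Algebra.norm_eq_norm_adjoin F y, hgen, mul_pow, ← pow_mul, hk, ← hk, ← hfin, htower]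
    simp
  have hneg : algebraMap F K a - x = algebraMap F K (-1) * y := by
    rw [hy, map_neg, map_one]
    ring
  rw [hneg, map_mul, Algebra.norm_algebraMap, hnorm, ← mul_assoc, ← mul_pow]
  simp

open Polynomial in
/-- Stepanov's method gives a square root bound, with a nonoptimal constant, for cubic character
sums. -/
theorem norm_sum_cubic_character_le {K : Type*} [Field K] [Fintype K] {f : K[X]}
    (hf : f.Monic) (hm : ¬ 3 ∣ f.natDegree) (g : ℕ) (hg : Fintype.card K = 3 * g + 1)
    (ψ : K → ℂ) (h0 : ψ 0 = 0) (h3 : ∀ y, y ≠ 0 → ψ y ^ 3 = 1)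
    (hpow : ∀ y z, y ≠ 0 → z ≠ 0 → ψ y = ψ z → y ^ g = z ^ g) :
    ‖∑ x, ψ (f.eval x)‖ ≤ (17 * f.natDegree + 30) * Real.sqrt (Fintype.card K) := by
  classical
  set Q := Fintype.card K with hQ
  set m := f.natDegree with hmdef
  have hω := Complex.isPrimitiveRoot_exp 3 (by norm_num)
  set ω := Complex.exp (2 * Real.pi * Complex.I / (3 : ℕ)) with hωdef
  have hωsum : ∑ i ∈ range 3, ω ^ i = 0 := hω.geom_sum_eq_zero (by norm_num)
  have hωinj : ∀ i ∈ range 3, ∀ j ∈ range 3, ω ^ i = ω ^ j → i = j := fun i hi j hj h =>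
    hω.pow_inj (mem_range.1 hi) (mem_range.1 hj) h
  have hω0 : ∀ i, ω ^ i ≠ 0 := fun i => pow_ne_zero _ (hω.ne_zero (by norm_num))
  have hωnorm : ∀ i, ‖ω ^ i‖ = 1 := fun i => by
    rw [norm_pow, hω.norm'_eq_one (by norm_num), one_pow]
  set N : ℕ → ℕ := fun i => #{x : K | ψ (f.eval x) = ω ^ i} with hN
  have hψ : ∀ y, y ≠ 0 → ∃ i ∈ range 3, ψ y = ω ^ i := fun y hy => by
    obtain ⟨i, hi, h⟩ := hω.eq_pow_of_pow_eq_one (h3 y hy)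
    exact ⟨i, mem_range.2 hi, h.symm⟩
  have hval : ∀ y, ψ y = ∑ i ∈ range 3, if ψ y = ω ^ i then ω ^ i else 0 := by
    intro y
    rcases eq_or_ne y 0 with rfl | hy
    · rw [h0, sum_eq_zero]
      exact fun i _ => if_neg (hω0 i).symm
    · obtain ⟨i, hi, h⟩ := hψ y hy
      rw [sum_eq_single i, if_pos h, h]
      · exact fun j hj hji => if_neg fun h' => hji (hωinj j hj i hi (h'.symm.trans h))
      · exact fun h' => absurd hi h'
  have hone : ∀ y, y ≠ 0 → ∑ i ∈ range 3, (if ψ y = ω ^ i then 1 else 0) = 1 := by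
    intro y hy
    obtain ⟨i, hi, h⟩ := hψ y hy
    rw [sum_eq_single i, if_pos h]
    · exact fun j hj hji => if_neg fun h' => hji (hωinj j hj i hi (h'.symm.trans h))
    · exact fun h' => absurd hi h'
  have hsum : ∑ x, ψ (f.eval x) = ∑ i ∈ range 3, N i * ω ^ i := by
    rw [sum_congr rfl fun x _ => hval (f.eval x), sum_comm]
    refine sum_congr rfl fun i _ => ?_
    rw [← sum_filter, sum_const, nsmul_eq_mul]
  have hupper : ∀ i, 3 * N i ≤ Q + (16 * m + 30) * Nat.sqrt Q := by
    intro i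
    rcases Finset.eq_empty_or_nonempty ({x : K | ψ (f.eval x) = ω ^ i} : Finset K) with he | he
    · simp [hN, he]
    · obtain ⟨x₀, hx₀⟩ := he
      have hx₀' := (mem_filter.1 hx₀).2
      have hne : ∀ x, ψ (f.eval x) = ω ^ i → f.eval x ≠ 0 := fun x hx h =>
        hω0 i (by rw [← hx, h, h0])
      refine le_trans (Nat.mul_le_mul_left 3 (card_le_card fun x hx => ?_))
        (stepanov_bound hf hm g hg (f.eval x₀ ^ g))
      have hx' := (mem_filter.1 hx).2
      exact mem_filter.2 ⟨mem_univ _,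
        hpow _ _ (hne x hx') (hne x₀ hx₀') (hx'.trans hx₀'.symm)⟩
  have hlower : Q ≤ ∑ i ∈ range 3, N i + m := by
    have h1 : ∑ i ∈ range 3, N i = ∑ x : K, ∑ i ∈ range 3,
        if ψ (f.eval x) = ω ^ i then 1 else 0 := by
      rw [sum_comm]
      simp only [hN, card_filter]
    have h2 : #{x : K | ¬ f.eval x = 0} ≤ ∑ i ∈ range 3, N i := by
      rw [h1, card_filter]
      refine sum_le_sum fun x _ => ?_
      split_ifs with h
      · exact Nat.zero_le _
      · rw [hone _ h]
    have h3 : #{x : K | f.eval x = 0} ≤ m := by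
      refine le_trans (card_le_card fun x hx => ?_)
        ((Multiset.toFinset_card_le _).trans (card_roots' f))
      rw [Multiset.mem_toFinset, mem_roots hf.ne_zero]
      exact (mem_filter.1 hx).2
    have h4 := card_filter_add_card_filter_not (s := (univ : Finset K)) (fun x => f.eval x = 0)
    rw [card_univ, ← hQ] at h4
    clear h1
    linarith
  set U : ℝ := (Q + (16 * m + 30) * Nat.sqrt Q) / 3 with hU
  have hUN : ∀ i, (N i : ℝ) ≤ U := by
    intro i
    rw [hU, le_div_iff₀ (by norm_num)]
    have := hupper i
    rw [mul_comm]
    exact_mod_cast this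
  have hshift : ∑ x, ψ (f.eval x) = ∑ i ∈ range 3, ((N i - U : ℝ) : ℂ) * ω ^ i := by
    rw [hsum]
    push_cast
    simp only [sub_mul, sum_sub_distrib, ← Finset.mul_sum, hωsum, mul_zero, sub_zero]
  rw [hshift]
  have hfinal : ‖∑ i ∈ range 3, ((N i - U : ℝ) : ℂ) * ω ^ i‖ ≤ ∑ i ∈ range 3, (U - N i) := by
    refine (norm_sum_le _ _).trans (sum_le_sum fun i _ => ?_)
    rw [norm_mul, hωnorm, mul_one, Complex.norm_real, Real.norm_eq_abs, abs_sub_comm,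
      abs_of_nonneg (sub_nonneg.2 (hUN i))]
  refine hfinal.trans ?_
  rw [sum_sub_distrib, sum_const, card_range, nsmul_eq_mul]
  have h1 : (Q : ℝ) ≤ ∑ i ∈ range 3, (N i : ℝ) + m := by exact_mod_cast hlower
  have h2 : (Nat.sqrt Q : ℝ) ≤ Real.sqrt Q := Real.nat_sqrt_le_real_sqrt
  have h3 : (1 : ℝ) ≤ Real.sqrt Q := by
    rw [Real.one_le_sqrt]
    exact_mod_cast Fintype.card_pos
  have h5 : (m : ℝ) * 1 ≤ m * Real.sqrt Q := by gcongr
  have h6 : (16 * (m : ℝ) + 30) * Nat.sqrt Q ≤ (16 * m + 30) * Real.sqrt Q := by gcongr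
  rw [hU]
  push_cast
  linarith

theorem MulChar.pow_three_eq_one_of_orderOf_eq_three {F : Type*} [Field F] {χ : MulChar F ℂ}
    (hχ : orderOf χ = 3) {y : F} (hy : y ≠ 0) : χ y ^ 3 = 1 := by
  have h : χ ^ 3 = 1 := hχ ▸ pow_orderOf_eq_one χ
  rw [← MulChar.pow_apply' χ (by norm_num), h, MulChar.one_apply hy.isUnit]

theorem MulChar.pow_eq_one_of_apply_eq_one {F : Type*} [Field F] [Fintype F] {χ : MulChar F ℂ}
    (hχ : orderOf χ = 3) {y : F} (hy : χ y = 1) : y ^ ((Fintype.card F - 1) / 3) = 1 := by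
  classical
  obtain ⟨u, hu⟩ := IsCyclic.exists_monoid_generator (α := Fˣ)
  have hy0 : y ≠ 0 := by
    rintro rfl
    simp at hy
  obtain ⟨j, hj⟩ := Submonoid.mem_powers_iff _ _ |>.1 (hu (Units.mk0 y hy0))
  have hyj : y = (u : F) ^ j := by
    rw [← Units.val_pow_eq_pow_val, hj, Units.val_mk0]
  have hw3 : χ u ^ 3 = 1 := pow_three_eq_one_of_orderOf_eq_three hχ u.ne_zero
  have hw1 : χ u ≠ 1 := by
    intro h
    have : χ = 1 := MulChar.eq_one_iff.2 fun a => by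
      obtain ⟨i, rfl⟩ := Submonoid.mem_powers_iff _ _ |>.1 (hu a)
      rw [Units.val_pow_eq_pow_val, map_pow, h, one_pow]
    rw [this, orderOf_one] at hχ
    norm_num at hχ
  have hord : orderOf (χ u) = 3 := orderOf_eq_prime hw3 hw1
  have hdvd : 3 ∣ j := by
    rw [← hord]
    refine orderOf_dvd_of_pow_eq_one ?_
    rw [← map_pow, ← hyj, hy]
  obtain ⟨i, rfl⟩ := hdvd
  obtain ⟨g, hg⟩ : 3 ∣ Fintype.card F - 1 := hχ ▸ MulChar.orderOf_dvd_card_sub_one F χ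
  rw [hg, Nat.mul_div_cancel_left _ (by norm_num), hyj, ← pow_mul,
    show 3 * i * g = (3 * g) * i by ring, ← hg, pow_mul,
    FiniteField.pow_card_sub_one_eq_one _ u.ne_zero, one_pow]

open Polynomial in
theorem MulChar.norm_sum_apply_norm_le {F K : Type*} [Field F] [Fintype F] [Field K] [Fintype K]
    [Algebra F K] {χ : MulChar F ℂ} (hχ : orderOf χ = 3) {f : K[X]} (hf : f.Monic)
    (hm : ¬ 3 ∣ f.natDegree) :
    ‖∑ x, χ (Algebra.norm F (f.eval x))‖ ≤
      (17 * f.natDegree + 30) * Real.sqrt (Fintype.card K) := by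
  obtain ⟨r, hr⟩ : 3 ∣ Fintype.card F - 1 := hχ ▸ MulChar.orderOf_dvd_card_sub_one F χ
  obtain ⟨d, hd⟩ : Fintype.card F - 1 ∣ Fintype.card K - 1 := by
    rw [Module.card_eq_pow_finrank (K := F) (V := K)]
    simpa using Nat.sub_dvd_pow_sub_pow (Fintype.card F) 1 (Module.finrank F K)
  have hF : 1 < Fintype.card F := Fintype.one_lt_card
  have hcard : Fintype.card K = 3 * (r * d) + 1 := by
    have : 0 < Fintype.card K := Fintype.card_pos
    have h : 3 * r * d = 3 * (r * d) := by ring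
    rw [hr, h] at hd
    omega
  refine norm_sum_cubic_character_le hf hm (r * d) hcard (fun x => χ (Algebra.norm F x)) ?_ ?_ ?_
  · simp
  · intro y hy
    exact pow_three_eq_one_of_orderOf_eq_three hχ (Algebra.norm_ne_zero_iff.2 hy)
  · intro y z hy hz hyz
    have hNz : Algebra.norm F z ≠ 0 := Algebra.norm_ne_zero_iff.2 hz
    have h1 : χ (Algebra.norm F (y * z⁻¹)) = 1 := by
      have hz' : χ (Algebra.norm F (z * z⁻¹)) = 1 := by rw [mul_inv_cancel₀ hz]; simp
      rw [map_mul, map_mul] at hz' ⊢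
      rw [← hz']
      exact congrArg (· * _) hyz
    have h2 := pow_eq_one_of_apply_eq_one hχ h1
    rw [hr, Nat.mul_div_cancel_left _ (by norm_num)] at h2
    have h3 := congrArg (algebraMap F K) h2
    rw [map_pow, FiniteField.algebraMap_norm_eq_pow, Nat.card_eq_fintype_card,
      Nat.card_eq_fintype_card, hd, Nat.mul_div_cancel_left _ (by omega), ← pow_mul, map_one,
      mul_pow, inv_pow, mul_inv_eq_one₀ (pow_ne_zero _ hz)] at h3
    rwa [mul_comm]

open Polynomial in
/-- The completely multiplicative function on polynomials sending `g` to the product over `a ∈ T` of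
the values of `χ` at `g(a) ^ e a`. -/
noncomputable def evalCharacter {F : Type*} [Field F] (χ : MulChar F ℂ) (T : Finset F)
    (e : F → ℕ) : F[X] →* ℂ where
  toFun g := ∏ a ∈ T, χ (g.eval a ^ e a)
  map_one' := by simp
  map_mul' g h := by simp [mul_pow, prod_mul_distrib]

open Polynomial in
theorem evalCharacter_apply {F : Type*} [Field F] (χ : MulChar F ℂ) (T : Finset F)
    (e : F → ℕ) (g : F[X]) : evalCharacter χ T e g = ∏ a ∈ T, χ (g.eval a ^ e a) := rfl

open Polynomial in
theorem sum_monicsOfDegree_evalCharacter_eq_zero {F : Type*} [Field F] [Finite F]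
    {χ : MulChar F ℂ} (hχ : orderOf χ = 3) {T : Finset F} (hT : T.Nonempty) {e : F → ℕ}
    (he : ∀ a ∈ T, ¬ 3 ∣ e a) {n : ℕ} (hn : #T ≤ n) :
    ∑ g ∈ monicsOfDegree F n, evalCharacter χ T e g = 0 := by
  classical
  obtain ⟨b, hb⟩ := hT
  obtain ⟨u, hu⟩ : ∃ u : Fˣ, χ u ≠ 1 := MulChar.ne_one_iff.1 fun h => by
    rw [h, orderOf_one] at hχ
    norm_num at hχ
  have hord : orderOf (χ u) = 3 :=
    orderOf_eq_prime (MulChar.pow_three_eq_one_of_orderOf_eq_three hχ u.ne_zero) hu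
  have hw : χ u ^ e b ≠ 1 := fun h => he b hb (hord ▸ orderOf_dvd_of_pow_eq_one h)
  set L := Lagrange.basis T id b with hL
  have hLb : L.eval b = 1 := Lagrange.eval_basis_self (v := id) Function.injective_id.injOn hb
  have hLa : ∀ a ∈ T, a ≠ b → L.eval a = 0 := fun a ha hab =>
    Lagrange.eval_basis_of_ne (v := id) hab.symm ha
  have hLdeg : L.degree < n := by
    rw [Lagrange.degree_basis (v := id) Function.injective_id.injOn hb]
    have : 0 < #T := card_pos.2 ⟨b, hb⟩
    exact_mod_cast (show #T - 1 < n by omega)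
  set φ : F → F[X] → F[X] := fun v g => g + C ((v - 1) * g.eval b) * L with hφ
  have hφb : ∀ v g, (φ v g).eval b = v * g.eval b := fun v g => by
    simp only [hφ, eval_add, eval_mul, eval_C, hLb]
    ring
  have hφa : ∀ v g, ∀ a ∈ T, a ≠ b → (φ v g).eval a = g.eval a := fun v g a ha hab => by
    simp [hφ, hLa a ha hab]
  have hφmem : ∀ v, ∀ g ∈ monicsOfDegree F n, φ v g ∈ monicsOfDegree F n := by
    intro v g hg
    rw [mem_monicsOfDegree] at hg ⊢
    have hdeg : (C ((v - 1) * g.eval b) * L).degree < g.degree := by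
      rw [degree_eq_natDegree hg.1.ne_zero, hg.2]
      rw [← smul_eq_C_mul]
      exact (degree_smul_le _ _).trans_lt hLdeg
    exact ⟨hg.1.add_of_left hdeg, by rw [natDegree_add_eq_left_of_degree_lt hdeg, hg.2]⟩
  have hφinv : ∀ v w g, v * w = 1 → φ v (φ w g) = g := by
    intro v w g hvw
    have h : φ v (φ w g) = φ w g + C ((v - 1) * (w * g.eval b)) * L := by
      rw [← hφb]
    rw [h]
    simp only [hφ]
    rw [add_assoc, ← add_mul, ← C_add,
      show (w - 1) * g.eval b + (v - 1) * (w * g.eval b) = 0 by linear_combination g.eval b * hvw,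
      C_0, zero_mul, add_zero]
  have hlam : ∀ g, evalCharacter χ T e (φ u g) = χ u ^ e b * evalCharacter χ T e g := by
    intro g
    rw [evalCharacter_apply, evalCharacter_apply, ← mul_prod_erase _ _ hb,
      ← mul_prod_erase T (fun a => χ (g.eval a ^ e a)) hb, hφb, mul_pow, map_mul, map_pow,
      mul_assoc]
    congr 2
    refine prod_congr rfl fun a ha => ?_
    rw [hφa _ _ a (mem_of_mem_erase ha) (ne_of_mem_erase ha)]
  have hsum : ∑ g ∈ monicsOfDegree F n, evalCharacter χ T e g =
      χ u ^ e b * ∑ g ∈ monicsOfDegree F n, evalCharacter χ T e g := by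
    rw [Finset.mul_sum]
    refine (sum_nbij' (φ u) (φ ↑u⁻¹) (hφmem _) (hφmem _) (fun g _ => hφinv _ _ _ (by simp))
      (fun g _ => hφinv _ _ _ (by simp)) fun g _ => (hlam g).symm).symm
  have : (χ u ^ e b - 1) * ∑ g ∈ monicsOfDegree F n, evalCharacter χ T e g = 0 := by
    rw [sub_mul, one_mul, ← hsum, sub_self]
  exact (mul_eq_zero.1 this).resolve_left (sub_ne_zero.2 hw)

open Polynomial in
theorem sum_monicsOfDegree_one {F : Type*} [Field F] [Fintype F] (φ : F[X] → ℂ) :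
    ∑ g ∈ monicsOfDegree F 1, φ g = ∑ x, φ (X - C x) := by
  symm
  refine sum_nbij (fun x => X - C x) ?_ ?_ ?_ fun _ _ => rfl
  · exact fun x _ => mem_monicsOfDegree.2 ⟨monic_X_sub_C x, natDegree_X_sub_C x⟩
  · intro x _ y _ hxy
    exact C_injective (sub_right_injective hxy)
  · intro g hg
    obtain ⟨h1, h2⟩ := mem_monicsOfDegree.1 hg
    refine ⟨-g.coeff 0, by simp, ?_⟩
    simp only [C_neg, sub_neg_eq_add]
    exact (h1.eq_X_add_C h2).symm

open Polynomial in
theorem sum_monicsOfDegree_zero {F : Type*} [Field F] [Finite F] (φ : F[X] → ℂ) :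
    ∑ g ∈ monicsOfDegree F 0, φ g = φ 1 := by
  refine sum_eq_single_of_mem 1 (mem_monicsOfDegree.2 ⟨monic_one, natDegree_one⟩) ?_
  intro g hg hg1
  obtain ⟨h1, h2⟩ := mem_monicsOfDegree.1 hg
  exact absurd (eq_one_of_monic_natDegree_zero h1 h2) hg1

theorem MulChar.apply_neg_of_orderOf_eq_three {F : Type*} [Field F] {χ : MulChar F ℂ}
    (hχ : orderOf χ = 3) (y : F) : χ (-y) = χ y := by
  rw [← neg_one_mul, map_mul,
    MulChar.val_neg_one_eq_one_of_odd_order (by decide : Odd 3) (hχ ▸ pow_orderOf_eq_one χ), one_mul]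

theorem MulChar.apply_norm_neg {F K : Type*} [Field F] [Field K] [Algebra F K]
    {χ : MulChar F ℂ} (hχ : orderOf χ = 3) (y : K) :
    χ (Algebra.norm F (-y)) = χ (Algebra.norm F y) := by
  have h : -y = algebraMap F K (-1) * y := by simp
  rw [h, map_mul, Algebra.norm_algebraMap, map_mul, map_pow, apply_neg_of_orderOf_eq_three hχ]
  simp

open Polynomial in
theorem evalCharacter_minpoly_pow {F K : Type*} [Field F] [Fintype F] [Field K] [Fintype K]
    [Algebra F K] {χ : MulChar F ℂ} (hχ : orderOf χ = 3) (T : Finset F) (e : F → ℕ) (x : K) :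
    evalCharacter χ T e (minpoly F x ^ (Module.finrank F K / (minpoly F x).natDegree)) =
      χ (Algebra.norm F ((∏ a ∈ T, (X - C (algebraMap F K a)) ^ e a).eval x)) := by
  rw [evalCharacter_apply, eval_prod, map_prod, map_prod]
  refine prod_congr rfl fun a _ => ?_
  rw [eval_pow, eval_pow, ← norm_algebraMap_sub_eq_eval_minpoly_pow, eval_sub, eval_X, eval_C,
    map_pow, map_pow, map_pow, ← neg_sub, MulChar.apply_norm_neg hχ]

open Polynomial in
theorem norm_sum_prod_le_of_not_dvd {F : Type*} [Field F] [Fintype F] {χ : MulChar F ℂ}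
    (hχ : orderOf χ = 3) {T : Finset F} (hT : T.Nonempty) {e : F → ℕ}
    (he : ∀ a ∈ T, ¬ 3 ∣ e a) (hsum : ¬ 3 ∣ ∑ a ∈ T, e a) :
    ‖∑ x, ∏ a ∈ T, χ ((x - a) ^ e a)‖ ≤ (#T - 1) * Real.sqrt (Fintype.card F) := by
  classical
  obtain ⟨p, hp⟩ := CharP.exists F
  have : Fact p.Prime := ⟨CharP.char_is_prime F p⟩
  set lam := evalCharacter χ T e with hlam
  set m := ∑ a ∈ T, e a with hm
  set S : ℕ → ℂ := fun k => ∑ P ∈ monicIrreducibles F k, ∑ j ∈ Icc 1 k,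
    if j * P.natDegree = k then P.natDegree * lam P ^ j else 0 with hS
  have hSn : ∀ n, ∀ k ∈ Icc 1 n, S k = ∑ P ∈ monicIrreducibles F n, ∑ j ∈ Icc 1 n,
      if j * P.natDegree = k then P.natDegree * lam P ^ j else 0 := by
    intro n k hk
    rw [mem_Icc] at hk
    have : NeZero k := ⟨by omega⟩
    have := Fintype.ofFinite (FiniteField.Extension F p k)
    have hfin := FiniteField.finrank_extension F p k
    simp only [hS]
    rw [← sum_minpoly_pow lam hfin hk.2, ← sum_minpoly_pow lam hfin le_rfl]
  have hbound : ∀ k, ‖S k‖ ≤ (17 * m + 30) * Real.sqrt (Fintype.card F) ^ k := by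
    intro k
    rcases Nat.eq_zero_or_pos k with rfl | hk
    · have : S 0 = 0 := by simp [hS]
      rw [this, norm_zero]
      positivity
    have : NeZero k := ⟨hk.ne'⟩
    have := Fintype.ofFinite (FiniteField.Extension F p k)
    have hfin := FiniteField.finrank_extension F p k
    have hcard : Fintype.card (FiniteField.Extension F p k) = Fintype.card F ^ k := by
      rw [Fintype.card_eq_nat_card, FiniteField.natCard_extension, Nat.card_eq_fintype_card]
    set f : (FiniteField.Extension F p k)[X] :=
      ∏ a ∈ T, (X - C (algebraMap F _ a)) ^ e a with hf
    have hmonic : f.Monic := monic_prod_of_monic _ _ fun a _ => (monic_X_sub_C _).pow _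
    have hdeg : f.natDegree = m := by
      rw [hf, natDegree_prod_of_monic _ _ fun a _ => (monic_X_sub_C _).pow _]
      simp [hm]
    have h := MulChar.norm_sum_apply_norm_le hχ hmonic (hdeg ▸ hsum)
    have hSk : S k = ∑ x, χ (Algebra.norm F (f.eval x)) := by
      simp only [hS]
      rw [← sum_minpoly_pow lam hfin le_rfl]
      refine sum_congr rfl fun x _ => ?_
      rw [hlam, ← evalCharacter_minpoly_pow hχ, hfin]
    have hsqrt : Real.sqrt ((Fintype.card F : ℝ) ^ k) = Real.sqrt (Fintype.card F) ^ k := by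
      rw [← Real.sqrt_sq (by positivity : 0 ≤ Real.sqrt (Fintype.card F : ℝ) ^ k), ← pow_mul,
        mul_comm, pow_mul, Real.sq_sqrt (by positivity)]
    rwa [← hSk, hdeg, hcard, Nat.cast_pow, hsqrt] at h
  have hR : 0 < Real.sqrt (Fintype.card F) := Real.sqrt_pos.2 (by exact_mod_cast Fintype.card_pos)
  have hT1 : 1 ≤ #T := card_pos.2 hT
  have key := norm_one_le_of_newton_identities (c := fun n => ∑ g ∈ monicsOfDegree F n, lam g)
    (S := S) (t := #T - 1) hR (by rw [sum_monicsOfDegree_zero, map_one])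
    (fun n hn => sum_monicsOfDegree_evalCharacter_eq_zero hχ hT he (by omega)) hbound
    (newton_identity_of_extensions lam S (by simp [hS]) hSn)
  rw [sum_monicsOfDegree_one, Nat.cast_sub hT1, Nat.cast_one] at key
  convert key using 3 with x
  rw [hlam, evalCharacter_apply]
  refine prod_congr rfl fun a _ => ?_
  rw [map_pow, map_pow, eval_sub, eval_X, eval_C, ← neg_sub a x,
    MulChar.apply_neg_of_orderOf_eq_three hχ]

theorem MulChar.norm_apply_le_one_of_orderOf_eq_three {F : Type*} [Field F] {χ : MulChar F ℂ}
    (hχ : orderOf χ = 3) (y : F) : ‖χ y‖ ≤ 1 := by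
  rcases eq_or_ne y 0 with rfl | hy
  · simp
  · exact (Complex.norm_eq_one_of_pow_eq_one (pow_three_eq_one_of_orderOf_eq_three hχ hy)
      (by norm_num)).le

/-- The Weil bound for sums of products of translates of a cubic character. -/
theorem norm_sum_prod_le {F : Type*} [Field F] [Fintype F] {χ : MulChar F ℂ}
    (hχ : orderOf χ = 3) {T : Finset F} (hT : T.Nonempty) {e : F → ℕ}
    (he : ∀ a ∈ T, ¬ 3 ∣ e a) :
    ‖∑ x, ∏ a ∈ T, χ ((x - a) ^ e a)‖ ≤ (#T - 1) * Real.sqrt (Fintype.card F) := by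
  classical
  by_cases hsum : 3 ∣ ∑ a ∈ T, e a
  swap
  · exact norm_sum_prod_le_of_not_dvd hχ hT he hsum
  obtain ⟨b, hb⟩ := hT
  have heb : e b ≠ 0 := fun h => he b hb (h ▸ dvd_zero 3)
  set T' := T.erase b with hT'
  have hsum' : ¬ 3 ∣ ∑ a ∈ T', e a := fun h => he b hb <| by
    rw [← add_sum_erase T e hb] at hsum
    exact (Nat.dvd_add_left h).1 hsum
  have hT'ne : T'.Nonempty := by
    rw [nonempty_iff_ne_empty]
    intro h
    simp [h] at hsum'
  set i : F → F := fun a => (a - b)⁻¹ with hi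
  have hinj : Function.Injective i := fun x y h => sub_left_injective (inv_injective h)
  have hleft : ∀ a, b + (i a)⁻¹ = a := fun a => by simp [hi]
  set G : F → ℂ := fun y => ∏ a ∈ T', χ ((y - i a) ^ e a) with hG
  have hGimage : ∀ y, G y = ∏ c ∈ T'.image i, χ ((y - c) ^ e (b + c⁻¹)) := fun y => by
    rw [prod_image hinj.injOn]
    simp only [hleft, hG]
  have hGbound : ‖∑ y, G y‖ ≤ (#T' - 1) * Real.sqrt (Fintype.card F) := by
    rw [sum_congr rfl fun y _ => hGimage y, ← card_image_of_injective T' hinj]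
    refine norm_sum_prod_le_of_not_dvd (e := fun c => e (b + c⁻¹)) hχ (hT'ne.image i) ?_ ?_
    · simp only [mem_image, forall_exists_index, and_imp, forall_apply_eq_imp_iff₂, hleft]
      exact fun a ha => he a (mem_of_mem_erase ha)
    · rw [sum_image hinj.injOn]
      simpa only [hleft] using hsum'
  set c : ℂ := ∏ a ∈ T', χ ((b - a) ^ e a) with hc
  have hle : ∀ z : F → F, ‖∏ a ∈ T', χ (z a)‖ ≤ 1 := fun z => by
    rw [norm_prod]
    exact prod_le_one (fun _ _ => norm_nonneg _)
      fun _ _ => MulChar.norm_apply_le_one_of_orderOf_eq_three hχ _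
  have hzero : ∏ a ∈ T, χ ((b - a) ^ e a) = 0 :=
    prod_eq_zero hb (by rw [sub_self, zero_pow heb, MulChar.map_zero])
  have hsub : ∀ y ≠ 0, ∏ a ∈ T, χ ((b + y⁻¹ - a) ^ e a) = c * G y := by
    intro y hy
    have h1 : ∀ a ∈ T', χ ((b + y⁻¹ - a) ^ e a) =
        χ y⁻¹ ^ e a * (χ ((b - a) ^ e a) * χ ((y - i a) ^ e a)) := by
      intro a ha
      have hab : a - b ≠ 0 := sub_ne_zero.2 (ne_of_mem_erase ha)
      rw [← map_mul, ← map_pow, ← map_mul, ← mul_pow, ← mul_pow]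
      congr 2
      simp only [hi]
      field_simp
      ring
    have h2 : χ ((b + y⁻¹ - b) ^ e b) = χ y⁻¹ ^ e b := by
      rw [add_sub_cancel_left, map_pow]
    rw [← mul_prod_erase T _ hb, prod_congr rfl h1, h2, prod_mul_distrib, ← mul_assoc,
      mul_prod_erase T (fun a => χ y⁻¹ ^ e a) hb, prod_pow_eq_pow_sum, prod_mul_distrib]
    obtain ⟨k, hk⟩ := hsum
    rw [hk, pow_mul, MulChar.pow_three_eq_one_of_orderOf_eq_three hχ (inv_ne_zero hy), one_pow,
      one_mul]
  have hreindex : ∑ x, ∏ a ∈ T, χ ((x - a) ^ e a) = c * (∑ y, G y - G 0) := by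
    rw [← ((Equiv.inv F).trans (Equiv.addLeft b)).sum_comp, ← add_sum_erase _ _ (mem_univ 0),
      ← add_sum_erase univ G (mem_univ 0), add_sub_cancel_left, Finset.mul_sum]
    simp only [Equiv.trans_apply, Equiv.inv_apply, Equiv.coe_addLeft, inv_zero, add_zero, hzero,
      zero_add]
    exact sum_congr rfl fun y hy => hsub y (ne_of_mem_erase hy)
  have hcard : (#T : ℝ) = #T' + 1 := by
    rw [hT', ← card_erase_add_one hb]
    push_cast
    rfl
  have hone : (1 : ℝ) ≤ Real.sqrt (Fintype.card F) := by
    rw [Real.one_le_sqrt]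
    exact_mod_cast Fintype.card_pos
  rw [hreindex, norm_mul]
  calc ‖c‖ * ‖∑ y, G y - G 0‖ ≤ 1 * (‖∑ y, G y‖ + ‖G 0‖) := by
        gcongr
        · exact hle _
        · exact norm_sub_le _ _
    _ ≤ (#T' - 1) * Real.sqrt (Fintype.card F) + 1 := by
        rw [one_mul]
        exact add_le_add hGbound (hle _)
    _ ≤ (#T - 1) * Real.sqrt (Fintype.card F) := by
        rw [hcard]
        linarith

theorem norm_sum_prod_apply_add_apply_sq_le {F : Type*} [Field F] [Fintype F] {χ : MulChar F ℂ}
    (hχ : orderOf χ = 3) {T : Finset F} (hT : T.Nonempty) :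
    ‖∑ x, ∏ a ∈ T, (χ (x - a) + χ ((x - a) ^ 2))‖ ≤
      2 ^ #T * ((#T - 1) * Real.sqrt (Fintype.card F)) := by
  classical
  have hexpand : ∀ x, ∏ a ∈ T, (χ (x - a) + χ ((x - a) ^ 2)) =
      ∑ U ∈ T.powerset, ∏ a ∈ T, χ ((x - a) ^ (if a ∈ U then 1 else 2)) := by
    intro x
    rw [prod_add]
    refine sum_congr rfl fun U hU => ?_
    rw [← prod_sdiff (mem_powerset.1 hU), mul_comm]
    refine congr_arg₂ _ (prod_congr rfl fun a ha => ?_) (prod_congr rfl fun a ha => ?_)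
    · rw [if_neg (mem_sdiff.1 ha).2]
    · rw [if_pos ha, pow_one]
  rw [sum_congr rfl fun x _ => hexpand x, sum_comm]
  refine (norm_sum_le _ _).trans ((sum_le_card_nsmul _ _ _ fun U _ =>
    norm_sum_prod_le hχ hT (e := fun a => if a ∈ U then 1 else 2) fun a _ => ?_).trans ?_)
  · split_ifs <;> norm_num
  · rw [card_powerset, nsmul_eq_mul]
    push_cast
    rfl

theorem norm_sum_prod_two_sub_sub_le {F : Type*} [Field F] [Fintype F] {χ : MulChar F ℂ}
    (hχ : orderOf χ = 3) (A : Finset F) :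
    ‖∑ x, ∏ a ∈ A, (2 - χ (x - a) - χ ((x - a) ^ 2)) - 2 ^ #A * Fintype.card F‖ ≤
      2 ^ #A * (∑ m ∈ range (#A + 1), (#A).choose m * ((m : ℝ) - 1) + 1) *
        Real.sqrt (Fintype.card F) := by
  classical
  set h : Finset F → ℂ := fun T => ∑ x, ∏ a ∈ T, (χ (x - a) + χ ((x - a) ^ 2)) with hh
  have hexpand : ∑ x, ∏ a ∈ A, (2 - χ (x - a) - χ ((x - a) ^ 2)) =
      ∑ T ∈ A.powerset, 2 ^ #(A \ T) * ((-1) ^ #T * h T) := by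
    simp only [hh, Finset.mul_sum]
    rw [sum_comm]
    refine sum_congr rfl fun x _ => ?_
    rw [prod_congr rfl fun a _ => (show 2 - χ (x - a) - χ ((x - a) ^ 2) =
      -(χ (x - a) + χ ((x - a) ^ 2)) + 2 by ring), prod_add]
    refine sum_congr rfl fun T _ => ?_
    rw [prod_neg, prod_const, mul_comm]
  have hempty : (∅ : Finset F) ∈ A.powerset := empty_mem_powerset A
  rw [hexpand, ← add_sum_erase _ _ hempty]
  have h0 : h ∅ = Fintype.card F := by simp [hh]
  rw [h0, sdiff_empty, card_empty, pow_zero, one_mul, add_sub_cancel_left]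
  have hsum : ∑ T ∈ A.powerset.erase ∅, ((#T : ℝ) - 1) =
      ∑ m ∈ range (#A + 1), (#A).choose m * ((m : ℝ) - 1) + 1 := by
    have h1 := sum_powerset_apply_card (fun m => (m : ℝ) - 1) (x := A)
    rw [← add_sum_erase _ _ hempty, card_empty] at h1
    simp only [nsmul_eq_mul] at h1
    rw [← h1]
    push_cast
    ring
  rw [← hsum, Finset.mul_sum, Finset.sum_mul]
  refine (norm_sum_le _ _).trans (sum_le_sum fun T hT => ?_)
  obtain ⟨hT0, hTA⟩ := mem_erase.1 hT
  rw [norm_mul, norm_mul, norm_pow, norm_pow, norm_neg, norm_one, one_pow, one_mul]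
  have hTA' := mem_powerset.1 hTA
  calc ‖(2 : ℂ)‖ ^ #(A \ T) * ‖h T‖
      ≤ 2 ^ #(A \ T) * (2 ^ #T * ((#T - 1) * Real.sqrt (Fintype.card F))) := by
        rw [Complex.norm_ofNat]
        gcongr
        exact norm_sum_prod_apply_add_apply_sq_le hχ (nonempty_iff_ne_empty.2 hT0)
    _ = 2 ^ #A * (#T - 1) * Real.sqrt (Fintype.card F) := by
        rw [← card_sdiff_add_card_eq_card hTA', pow_add]
        ring

theorem MulChar.conj_apply_of_orderOf_eq_three {F : Type*} [Field F] {χ : MulChar F ℂ}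
    (hχ : orderOf χ = 3) (y : F) : starRingEnd ℂ (χ y) = χ (y ^ 2) := by
  rcases eq_or_ne y 0 with rfl | hy
  · simp
  · have h3 := pow_three_eq_one_of_orderOf_eq_three hχ hy
    have hne : χ y ≠ 0 := fun h => by simp [h] at h3
    have hnorm := Complex.norm_eq_one_of_pow_eq_one h3 (by norm_num)
    refine mul_right_cancel₀ hne ?_
    rw [Complex.conj_mul', hnorm, map_pow, ← pow_succ, h3]
    norm_num

theorem card_zero_one_neg_one_sqrt {F : Type*} [Field F] [DecidableEq F] (h2 : (2 : F) ≠ 0) {ζ : F}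
    (hζ : ζ ^ 2 = -1) : #({0, 1, -1, ζ, -ζ} : Finset F) = 5 := by
  have hζ0 : ζ ≠ 0 := by
    rintro rfl
    norm_num at hζ
  have h11 : (1 : F) ≠ -1 := fun h => h2 (by linear_combination h)
  have h1 : ζ ≠ 1 := by
    rintro rfl
    exact h11 (by simpa using hζ)
  have h1' : ζ ≠ -1 := by
    rintro rfl
    exact h11 (by simpa using hζ)
  have hζζ : ζ ≠ -ζ := fun h => mul_ne_zero h2 hζ0 (by linear_combination h)
  have h1n : (1 : F) ≠ -ζ := fun h => h1' (by linear_combination h)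
  rw [card_insert_of_notMem, card_insert_of_notMem, card_insert_of_notMem, card_insert_of_notMem,
    card_singleton]
  · simpa using hζζ
  · simpa using ⟨h1'.symm, h1.symm⟩
  · simpa using ⟨h11, h1.symm, h1n⟩
  · simpa using ⟨hζ0.symm, hζ0⟩

theorem prod_two_sub_sub_eq_zero {F : Type*} [Field F] [DecidableEq F] {χ : MulChar F ℂ}
    (hχ : orderOf χ = 3) {ζ : F} (hζ : ζ ^ 2 = -1) {γ : F}
    (hγ : γ ∈ ({0, 1, -1, ζ, -ζ} : Finset F)) :
    ∏ α ∈ ({0, 1, -1, ζ, -ζ} : Finset F), (2 - χ (γ - α) - χ ((γ - α) ^ 2)) = 0 := by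
  have hone : ∀ α, χ (γ - α) = 1 → 2 - χ (γ - α) - χ ((γ - α) ^ 2) = 0 := fun α h => by
    rw [map_pow, h]
    norm_num
  rcases eq_or_ne γ 0 with rfl | hγ0
  · refine prod_eq_zero (i := 1) (by simp) (hone _ ?_)
    rw [zero_sub, MulChar.apply_neg_of_orderOf_eq_three hχ, map_one]
  · refine prod_eq_zero (i := 0) (by simp) (hone _ ?_)
    rw [sub_zero]
    have hγ4 : γ ^ 4 = 1 := by
      simp only [mem_insert, mem_singleton] at hγ
      have hζ4 : ζ ^ 4 = 1 := by linear_combination (ζ ^ 2 - 1) * hζ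
      rcases hγ with h | rfl | rfl | rfl | rfl
      · exact absurd h hγ0
      · ring
      · ring
      · exact hζ4
      · linear_combination hζ4
    have h4 : χ γ ^ 4 = 1 := by rw [← map_pow, hγ4, map_one]
    have h3 := MulChar.pow_three_eq_one_of_orderOf_eq_three hχ hγ0
    linear_combination h4 - χ γ * h3

/-- For a prime power `q ≡ 1 (mod 4)` with `3 ∣ q - 1`, with `C₅ = {0, 1, -1, ζ, -ζ}` where
`ζ² = -1`, and a multiplicative character `χ₃` of order `3`, the character sum
`S(3; q, 5) = ∑_{γ ∈ F_q \ C₅} ∏_{α ∈ C₅} (2 - χ₃(γ - α) - χ₃((γ - α)²))` is real and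
satisfies `S(3; q, 5) ≥ 2⁵ (q - 49 √q - 160)`. -/
theorem cubic_char_sum_lower_bound
    (q : ℕ) (hq : IsPrimePow q) (hq4 : q % 4 = 1) (h3 : 3 ∣ q - 1)
    (F : Type*) [Field F] [Fintype F] [DecidableEq F] (hF : Fintype.card F = q)
    (ζ : F) (hζ : ζ ^ 2 = -1)
    (χ : MulChar F ℂ) (hχ : orderOf χ = 3) :
    (∑ γ ∈ univ \ ({0, 1, -1, ζ, -ζ} : Finset F),
        ∏ α ∈ ({0, 1, -1, ζ, -ζ} : Finset F),
          (2 - χ (γ - α) - χ ((γ - α) ^ 2))).im = 0 ∧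
      2 ^ 5 * ((q : ℝ) - 49 * Real.sqrt q - 160) ≤
        (∑ γ ∈ univ \ ({0, 1, -1, ζ, -ζ} : Finset F),
          ∏ α ∈ ({0, 1, -1, ζ, -ζ} : Finset F),
            (2 - χ (γ - α) - χ ((γ - α) ^ 2))).re := by
  have h2 : (2 : F) ≠ 0 := Ring.two_ne_zero fun h => by
    have := FiniteField.even_card_of_char_two h
    omega
  have hcard := card_zero_one_neg_one_sqrt h2 hζ
  have huniv : ∑ γ ∈ univ \ ({0, 1, -1, ζ, -ζ} : Finset F),
        ∏ α ∈ ({0, 1, -1, ζ, -ζ} : Finset F), (2 - χ (γ - α) - χ ((γ - α) ^ 2)) =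
      ∑ γ, ∏ α ∈ ({0, 1, -1, ζ, -ζ} : Finset F), (2 - χ (γ - α) - χ ((γ - α) ^ 2)) :=
    sum_subset (subset_univ _) fun γ _ hγ => prod_two_sub_sub_eq_zero hχ hζ <|
      by_contra fun h => hγ (mem_sdiff.2 ⟨mem_univ _, h⟩)
  rw [huniv]
  constructor
  · rw [← Complex.conj_eq_iff_im, map_sum]
    refine sum_congr rfl fun γ _ => ?_
    rw [map_prod]
    refine prod_congr rfl fun α _ => ?_
    rw [map_sub, map_sub, map_ofNat, ← MulChar.conj_apply_of_orderOf_eq_three hχ,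
      Complex.conj_conj, sub_right_comm]
  · have h := norm_sum_prod_two_sub_sub_le hχ ({0, 1, -1, ζ, -ζ} : Finset F)
    have hsum : ∑ m ∈ range (5 + 1), (Nat.choose 5 m : ℝ) * ((m : ℝ) - 1) + 1 = 49 := by
      norm_num [sum_range_succ, Nat.choose]
    rw [hcard, hF, hsum] at h
    have hre := (abs_le.1 ((Complex.abs_re_le_norm _).trans h)).1
    have hmain : ((2 : ℂ) ^ 5 * (q : ℂ)).re = 2 ^ 5 * (q : ℝ) := by
      norm_num
    rw [Complex.sub_re, hmain] at hre
    linarith
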